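/- arXiv:2005.02045 — 2 statements merged into one kernel-verified Lean document; each statement's English description precedes it below -/
import Mathlib

section
/- For every r ∈ [0,2] there exists a real Banach space X such that 𝒯^s(X) = 𝒯(X) = 𝒯^cc(X) = r. -/
open Metric Set

noncomputable section

variable (X : Type*) [NormedAddCommGroup X] [NormedSpace ℝ X]

/-- A subset `U` of `X` is weakly open if it is open in the weak topology of `X`. -/
def IsWeaklyOpen (U : Set X) : Prop := IsOpen (toWeakSpace ℝ X '' U)

/-- The slice `S(B_X, f, α) = {x ∈ B_X : f x > 1 - α}` of the closed unit ball of `X`. -/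
def sliceSet (f : X →L[ℝ] ℝ) (α : ℝ) : Set X :=
  {y ∈ closedBall (0 : X) 1 | 1 - α < f y}

/-- `S` is a slice of the closed unit ball of `X`, i.e. `S = S(B_X, f, α)` for some norm-one
functional `f` and some `α > 0`. -/
def IsSlice (S : Set X) : Prop :=
  ∃ f : X →L[ℝ] ℝ, ‖f‖ = 1 ∧ ∃ α > (0 : ℝ), S = sliceSet X f α

/-- The Daugavet index of thickness `𝒯ˢ(X)`: the infimum of all `r > 0` such that some slice of
the closed unit ball is contained in a closed ball of radius `r` centered at a point of the unit
sphere. -/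
def Ts : ℝ :=
  sInf {r : ℝ | 0 < r ∧ ∃ x : X, ‖x‖ = 1 ∧ ∃ S : Set X, IsSlice X S ∧ S ⊆ closedBall x r}

/-- `W` is a nonempty relatively weakly open subset of the closed unit ball of `X`. -/
def IsRelWeakOpen (W : Set X) : Prop :=
  W.Nonempty ∧ ∃ U : Set X, IsWeaklyOpen X U ∧ W = closedBall (0 : X) 1 ∩ U

/-- The Daugavet index of thickness `𝒯(X)`: the infimum of all `r > 0` such that some nonempty
relatively weakly open subset of the closed unit ball is contained in a closed ball of radius `r`
centered at a point of the unit sphere. -/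
def Tw : ℝ :=
  sInf {r : ℝ | 0 < r ∧ ∃ x : X, ‖x‖ = 1 ∧ ∃ W : Set X, IsRelWeakOpen X W ∧
    W ⊆ closedBall x r}

/-- The convex combination `∑ i, l i • W i` of the sets `W i` (the set of all sums
`∑ i, l i • w i` with `w i ∈ W i`). -/
def comboSet {n : ℕ} (l : Fin n → ℝ) (W : Fin n → Set X) : Set X :=
  {z : X | ∃ w : Fin n → X, (∀ i, w i ∈ W i) ∧ z = ∑ i, l i • w i}

/-- The Daugavet index of thickness `𝒯ᶜᶜ(X)`: the infimum of all `r > 0` such that some convex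
combination of nonempty relatively weakly open subsets of the closed unit ball is contained in a
closed ball of radius `r` centered at a point of the unit sphere. -/
def Tcc : ℝ :=
  sInf {r : ℝ | 0 < r ∧ ∃ x : X, ‖x‖ = 1 ∧ ∃ (n : ℕ) (l : Fin n → ℝ) (W : Fin n → Set X),
    (∀ i, 0 ≤ l i) ∧ (∑ i, l i) = 1 ∧ (∀ i, IsRelWeakOpen X (W i)) ∧
    comboSet X l W ⊆ closedBall x r}

/-- `X` has the Daugavet property: for every `x` in the unit sphere, every `ε > 0` and every
slice `S` of the closed unit ball there exists `y ∈ S` with `‖x - y‖ ≥ 2 - ε`. -/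
def DaugavetProperty : Prop :=
  ∀ x : X, ‖x‖ = 1 → ∀ ε > (0 : ℝ), ∀ S : Set X, IsSlice X S → ∃ y ∈ S, 2 - ε ≤ ‖x - y‖

open Filter Function Topology
open scoped NNReal

/-! Let `K` be a perfect compact Hausdorff space, `p ∈ K`, and renorm `C(K)` by the convex
combination `a * ‖f‖ + b * |f p|` of the sup norm and of evaluation at `p`. All three indices are
then `2 * a`.

On a thin slice defined by evaluation at `p`, `|f p|` is almost `1` and the norm at most `1`, so
`a * ‖f‖` is at most about `a` and the slice is almost within distance `2 * a` of the constant `1`.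

Conversely, let `u` have new norm `1`. Then `|u|` exceeds `1 - ε` on an infinite open set `V`
avoiding `p`, and any `f` in the unit ball can be changed on `V` by bumps with disjoint supports:
such bumps are weakly null, do not alter `f p`, and can force the value at a point of `V` to be
opposite to that of `u`. All the members of a convex combination of weakly open sets can be changed
at the same points of `V`, so the combination has a point almost at distance `2 * a` from `u`. The
degenerate case `a = 0` is realised by the real line. -/

section Indices

variable {E : Type*} [NormedAddCommGroup E] [NormedSpace ℝ E]

theorem isWeaklyOpen_setOf_lt_apply (f : E →L[ℝ] ℝ) (c : ℝ) : IsWeaklyOpen E {y | c < f y} := by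
  have hf : Continuous fun y : WeakSpace ℝ E => f ((toWeakSpace ℝ E).symm y) :=
    WeakBilin.eval_continuous (topDualPairing ℝ E).flip f
  rw [IsWeaklyOpen, LinearEquiv.image_eq_preimage_symm]
  exact isOpen_lt continuous_const hf

theorem exists_mem_closedBall_lt_apply {f : E →L[ℝ] ℝ} {c : ℝ} (hc : c < ‖f‖) :
    ∃ y ∈ closedBall (0 : E) 1, c < f y := by
  obtain ⟨y, hy, hcy⟩ := f.exists_lt_apply_of_lt_opNorm hc
  obtain ⟨σ, hσ, hσy⟩ := RCLike.exists_norm_eq_mul_self (f y)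
  refine ⟨σ • y, by simpa [norm_smul, hσ] using hy.le, ?_⟩
  rw [map_smul, smul_eq_mul, ← hσy]
  exact hcy

theorem IsSlice.isRelWeakOpen {S : Set E} (hS : IsSlice E S) : IsRelWeakOpen E S := by
  obtain ⟨f, hf, α, hα, rfl⟩ := hS
  obtain ⟨y, hy, hfy⟩ := exists_mem_closedBall_lt_apply (f := f) (c := 1 - α) (by linarith)
  exact ⟨⟨y, hy, hfy⟩, _, isWeaklyOpen_setOf_lt_apply f (1 - α), rfl⟩

theorem IsRelWeakOpen.subset_closedBall {W : Set E} (hW : IsRelWeakOpen E W) :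
    W ⊆ closedBall 0 1 := by
  obtain ⟨-, U, -, rfl⟩ := hW
  exact inter_subset_left

theorem IsRelWeakOpen.eventually_mem {W : Set E} (hW : IsRelWeakOpen E W) {ι : Type*}
    {l : Filter ι} {v : ι → E} {w : E} (hw : w ∈ W) (hv : ∀ i, v i ∈ closedBall 0 1)
    (hlim : ∀ φ : E →L[ℝ] ℝ, Tendsto (fun i => φ (v i)) l (𝓝 (φ w))) :
    ∀ᶠ i in l, v i ∈ W := by
  obtain ⟨-, U, hU, rfl⟩ := hW
  have evals_isInducing : IsInducing fun (x : WeakBilin (topDualPairing ℝ E).flip) φ =>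
    (topDualPairing ℝ E).flip x φ := ⟨rfl⟩
  have hweak : Tendsto (fun i => toWeakSpace ℝ E (v i)) l (𝓝 (toWeakSpace ℝ E w)) :=
    evals_isInducing.tendsto_nhds_iff.2 (tendsto_pi_nhds.2 hlim)
  filter_upwards [hweak.eventually (hU.mem_nhds (mem_image_of_mem _ hw.2))] with i hi
  exact ⟨hv i, (toWeakSpace ℝ E).injective.mem_set_image.1 hi⟩

theorem comboSet_one (W : Set E) : comboSet E (fun _ : Fin 1 => 1) (fun _ => W) = W := by
  ext z
  constructor
  · rintro ⟨w, hw, rfl⟩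
    simpa using hw 0
  · exact fun hz => ⟨fun _ => z, fun _ => hz, by simp⟩

theorem exists_isSlice_subset_closedBall_two (E : Type*) [NormedAddCommGroup E] [NormedSpace ℝ E]
    [Nontrivial E] : ∃ x : E, ‖x‖ = 1 ∧ ∃ S, IsSlice E S ∧ S ⊆ closedBall x 2 := by
  obtain ⟨x, hx⟩ := exists_norm_eq E zero_le_one
  obtain ⟨f, hf, -⟩ := exists_dual_vector' ℝ x
  refine ⟨x, hx, sliceSet E f 1, ⟨f, hf, 1, one_pos, rfl⟩, fun y hy => ?_⟩
  have hy₁ : ‖y‖ ≤ 1 := mem_closedBall_zero_iff.1 hy.1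
  rw [mem_closedBall, dist_eq_norm]
  linarith [norm_sub_le y x]

theorem ts_le {ρ : ℝ} (hρ : 0 < ρ) {x : E} (hx : ‖x‖ = 1) {S : Set E} (hS : IsSlice E S)
    (hSx : S ⊆ closedBall x ρ) : Ts E ≤ ρ :=
  csInf_le ⟨0, fun _ h => h.1.le⟩ ⟨hρ, x, hx, S, hS, hSx⟩

theorem tcc_le {ρ : ℝ} (hρ : 0 < ρ) {x : E} (hx : ‖x‖ = 1) {W : Set E} (hW : IsRelWeakOpen E W)
    (hWx : W ⊆ closedBall x ρ) : Tcc E ≤ ρ :=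
  csInf_le ⟨0, fun _ h => h.1.le⟩
    ⟨hρ, x, hx, 1, fun _ => 1, fun _ => W, fun _ => zero_le_one, by simp, fun _ => hW,
      (comboSet_one W).symm ▸ hWx⟩

theorem tcc_nonneg (E : Type*) [NormedAddCommGroup E] [NormedSpace ℝ E] : 0 ≤ Tcc E :=
  Real.sInf_nonneg fun _ h => h.1.le

theorem tw_le_ts (E : Type*) [NormedAddCommGroup E] [NormedSpace ℝ E] [Nontrivial E] :
    Tw E ≤ Ts E := by
  obtain ⟨x, hx, S, hS, hSx⟩ := exists_isSlice_subset_closedBall_two E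
  refine csInf_le_csInf ⟨0, fun _ h => h.1.le⟩ ⟨2, two_pos, x, hx, S, hS, hSx⟩ ?_
  rintro ρ ⟨hρ, x, hx, S, hS, hSx⟩
  exact ⟨hρ, x, hx, S, hS.isRelWeakOpen, hSx⟩

theorem tcc_le_tw (E : Type*) [NormedAddCommGroup E] [NormedSpace ℝ E] [Nontrivial E] :
    Tcc E ≤ Tw E := by
  obtain ⟨x, hx, S, hS, hSx⟩ := exists_isSlice_subset_closedBall_two E
  refine le_csInf ⟨2, two_pos, x, hx, S, hS.isRelWeakOpen, hSx⟩ ?_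
  rintro ρ ⟨hρ, x, hx, W, hW, hWx⟩
  exact tcc_le hρ hx hW hWx

theorem le_tcc [Nontrivial E] {r : ℝ}
    (h : ∀ ρ : ℝ, ∀ x : E, ‖x‖ = 1 → ∀ (n : ℕ) (l : Fin n → ℝ) (W : Fin n → Set E),
      (∀ i, 0 ≤ l i) → ∑ i, l i = 1 → (∀ i, IsRelWeakOpen E (W i)) →
      comboSet E l W ⊆ closedBall x ρ → r ≤ ρ) : r ≤ Tcc E := by
  obtain ⟨x, hx, S, hS, hSx⟩ := exists_isSlice_subset_closedBall_two E
  refine le_csInf ⟨2, two_pos, x, hx, 1, fun _ => 1, fun _ => S, fun _ => zero_le_one, by simp,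
    fun _ => hS.isRelWeakOpen, (comboSet_one S).symm ▸ hSx⟩ ?_
  rintro ρ ⟨-, x, hx, n, l, W, hl, hsum, hW, hsub⟩
  exact h ρ x hx n l W hl hsum hW hsub

theorem indices_eq_of_ts_le_of_le_tcc [Nontrivial E] {r : ℝ} (hTs : Ts E ≤ r) (hTcc : r ≤ Tcc E) :
    Ts E = r ∧ Tw E = r ∧ Tcc E = r := by
  have hcw := tcc_le_tw E
  have hws := tw_le_ts E
  refine ⟨?_, ?_, ?_⟩ <;> linarith

theorem ts_le_two_mul {a b : ℝ} (ha : 0 ≤ a) (hb : 0 ≤ b) (hab : a + b = 1) (N : Seminorm ℝ E)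
    (f : E →L[ℝ] ℝ) (hnorm : ∀ y, ‖y‖ = a * N y + b * |f y|) (hfN : ∀ y, |f y| ≤ N y) {x : E}
    (hNx : N x = 1) (hfx : f x = 1) : Ts E ≤ 2 * a := by
  have hx : ‖x‖ = 1 := by rw [hnorm, hNx, hfx, abs_one, mul_one, mul_one, hab]
  have hf : ‖f‖ = 1 := by
    refine f.opNorm_eq_of_bounds zero_le_one (fun y => ?_) fun M _ hM => ?_
    · rw [one_mul, hnorm, Real.norm_eq_abs]
      linear_combination a * hfN y - |f y| * hab
    · simpa [hfx, hx] using hM x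
  refine le_of_forall_pos_le_add fun ε hε => ts_le (by positivity) hx
    ⟨f, hf, ε / 2, half_pos hε, rfl⟩ fun y ⟨hy, hfy⟩ => ?_
  rw [mem_closedBall_zero_iff] at hy
  have hfy₁ : f y ≤ 1 :=
    (le_abs_self _).trans ((f.le_of_opNorm_le_of_le hf.le hy).trans_eq (one_mul 1))
  have hNyx : N (y - x) ≤ N y + 1 := by simpa only [hNx] using map_sub_le_add N y x
  have hfyx : |f (y - x)| ≤ ε / 2 := by
    rw [map_sub, hfx, abs_le]
    constructor <;> linarith
  have haNy : a * N y ≤ 1 - b * (1 - ε / 2) := by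
    rw [hnorm] at hy
    linarith [mul_le_mul_of_nonneg_left (hfy.le.trans (le_abs_self _)) hb]
  rw [mem_closedBall, dist_eq_norm]
  calc ‖y - x‖ = a * N (y - x) + b * |f (y - x)| := hnorm _
    _ ≤ a * (N y + 1) + b * (ε / 2) := by gcongr
    _ ≤ 1 - b * (1 - ε / 2) + a + b * (ε / 2) := by linarith
    _ = 2 * a + b * ε := by linear_combination -hab
    _ ≤ 2 * a + ε := by nlinarith

theorem le_of_comboSet_subset_closedBall {r ρ : ℝ} {x : E} {ι : Type*} {F : Filter ι} [F.NeBot]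
    {g : ι → E →L[ℝ] ℝ} (hg : ∀ i, ‖g i‖ ≤ 1)
    (happrox : ∀ w ∈ closedBall (0 : E) 1, ∃ v : ι → E, (∀ i, v i ∈ closedBall 0 1) ∧
      (∀ i, r ≤ g i (v i - x)) ∧ ∀ φ : E →L[ℝ] ℝ, Tendsto (fun i => φ (v i)) F (𝓝 (φ w)))
    {n : ℕ} {l : Fin n → ℝ} {W : Fin n → Set E} (hl : ∀ j, 0 ≤ l j) (hsum : ∑ j, l j = 1)
    (hW : ∀ j, IsRelWeakOpen E (W j)) (hsub : comboSet E l W ⊆ closedBall x ρ) : r ≤ ρ := by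
  choose w hw using fun j => (hW j).1
  choose v hv hgv hlim using fun j => happrox (w j) ((hW j).subset_closedBall (hw j))
  obtain ⟨i, hi⟩ := (eventually_all.2 fun j =>
    (hW j).eventually_mem (hw j) (hv j) (hlim j)).exists
  have hρ : ‖∑ j, l j • v j i - x‖ ≤ ρ := mem_closedBall_iff_norm.1 (hsub ⟨_, hi, rfl⟩)
  have hcombo : ∑ j, l j • v j i - x = ∑ j, l j • (v j i - x) := by
    simp only [smul_sub, Finset.sum_sub_distrib, ← Finset.sum_smul, hsum, one_smul]
  calc r = ∑ j, l j * r := by rw [← Finset.sum_mul, hsum, one_mul]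
    _ ≤ ∑ j, l j * g i (v j i - x) :=
      Finset.sum_le_sum fun j _ => mul_le_mul_of_nonneg_left (hgv j i) (hl j)
    _ = g i (∑ j, l j • v j i - x) := by simp only [hcombo, map_sum, map_smul, smul_eq_mul]
    _ ≤ ‖∑ j, l j • v j i - x‖ :=
      (le_abs_self _).trans (((g i).le_of_opNorm_le_of_le (hg i) le_rfl).trans_eq (one_mul _))
    _ ≤ ρ := hρ

end Indices

section ContinuousFunctions

theorem summable_abs_apply_of_norm_sum_smul_le {Y ι : Type*} [NormedAddCommGroup Y]
    [NormedSpace ℝ Y] {h : ι → Y} {C : ℝ}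
    (hC : ∀ (F : Finset ι) (c : ι → ℝ), (∀ i, |c i| ≤ 1) → ‖∑ i ∈ F, c i • h i‖ ≤ C)
    (φ : Y →L[ℝ] ℝ) : Summable fun i => |φ (h i)| := by
  refine summable_of_sum_le (c := ‖φ‖ * C) (fun _ => abs_nonneg _) fun F => ?_
  choose σ hσ hσφ using fun i => RCLike.exists_norm_eq_mul_self (φ (h i))
  calc ∑ i ∈ F, |φ (h i)| = φ (∑ i ∈ F, σ i • h i) := by
        rw [map_sum]
        exact Finset.sum_congr rfl fun i _ => (hσφ i).trans (by rw [map_smul, smul_eq_mul])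
    _ ≤ ‖φ‖ * C := (le_abs_self _).trans
      (φ.le_opNorm_of_le (hC F σ fun i => (hσ i).le))

variable {K : Type*} [TopologicalSpace K]

theorem tendsto_apply_cofinite_zero_of_pairwise_mul_eq_zero [CompactSpace K] {ι : Type*}
    {h : ι → C(K, ℝ)} {M : ℝ≥0} (hM : ∀ i, ‖h i‖₊ ≤ M) (hmul : Pairwise ((· * · = 0) on h))
    (φ : C(K, ℝ) →L[ℝ] ℝ) : Tendsto (fun i => φ (h i)) cofinite (𝓝 0) := by
  refine (tendsto_zero_iff_abs_tendsto_zero _).2 (Summable.tendsto_cofinite_zero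
    (summable_abs_apply_of_norm_sum_smul_le (C := M) (fun F c hc => ?_) φ))
  have hcmul : Pairwise ((· * · = 0) on fun i => c i • h i) := fun i j hij => by
    simp only [onFun, smul_mul_smul_comm, hmul hij, smul_zero]
  have hcM : ∀ i, ‖c i • h i‖₊ ≤ M := fun i => by
    have hci : ‖c i‖₊ ≤ 1 := hc i
    rw [nnnorm_smul]
    exact (mul_le_mul' hci (hM i)).trans_eq (one_mul M)
  rw [← coe_nnnorm, NNReal.coe_le_coe, ContinuousMap.nnnorm_sum_eq_sup F hcmul]
  exact Finset.sup_le fun i _ => hcM i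

theorem exists_pairwise_mul_eq_zero_bumps [T4Space K] {U : Set K} (hU : IsOpen U)
    (hinf : U.Infinite) :
    ∃ (t : ℕ → K) (β : ℕ → C(K, ℝ)), (∀ n, t n ∈ U) ∧ (∀ n, β n (t n) = 1) ∧
      (∀ n s, β n s ∈ Icc (0 : ℝ) 1) ∧ (∀ n, ∀ s ∉ U, β n s = 0) ∧
      Pairwise ((· * · = 0) on β) := by
  have : Infinite U := hinf.to_subtype
  obtain ⟨V, hVinf, hVopen, hVdisj⟩ := exists_seq_infinite_isOpen_pairwise_disjoint U
  choose t ht using fun n => (hVinf n).nonempty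
  have hVopen' : ∀ n, IsOpen ((↑) '' V n : Set K) :=
    fun n => hU.isOpenMap_subtype_val _ (hVopen n)
  choose β hβ_zero hβ_one hβ using fun n => exists_continuous_zero_one_of_isClosed
    (hVopen' n).isClosed_compl (isClosed_singleton (x := (t n : K)))
    (disjoint_singleton_right.2 fun h => h (mem_image_of_mem _ (ht n)))
  refine ⟨fun n => t n, β, fun n => (t n).2, fun n => hβ_one n rfl, hβ,
    fun n s hs => hβ_zero n fun hsV => hs (Subtype.coe_image_subset _ _ hsV), fun m n hmn => ?_⟩
  ext s
  have hdisj : Disjoint ((↑) '' V m : Set K) ((↑) '' V n) :=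
    (disjoint_image_iff Subtype.val_injective).2 (hVdisj hmn)
  by_cases hs : s ∈ ((↑) '' V m : Set K)
  · exact mul_eq_zero_of_right _ (hβ_zero n (hdisj.notMem_of_mem_left hs))
  · exact mul_eq_zero_of_left (hβ_zero m hs) _

variable [CompactSpace K]

theorem norm_add_mul_const_sub_le {β f : C(K, ℝ)} {c : ℝ} (hβ : ∀ s, β s ∈ Icc (0 : ℝ) 1)
    (hf : ‖f‖ ≤ |c|) : ‖f + β * (ContinuousMap.const K c - f)‖ ≤ |c| := by
  refine (ContinuousMap.norm_le _ (abs_nonneg c)).2 fun s => ?_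
  have hfs : f s ∈ closedBall (0 : ℝ) |c| :=
    mem_closedBall_zero_iff.2 ((f.norm_coe_le_norm s).trans hf)
  have hc : c ∈ closedBall (0 : ℝ) |c| := mem_closedBall_zero_iff.2 le_rfl
  exact mem_closedBall_zero_iff.1 ((convex_closedBall 0 |c|).add_smul_sub_mem hfs hc (hβ s))

theorem tendsto_apply_add_mul_cofinite {ι : Type*} {β : ι → C(K, ℝ)} {M : ℝ≥0}
    (hM : ∀ i, ‖β i‖₊ ≤ M) (hmul : Pairwise ((· * · = 0) on β)) (f g : C(K, ℝ))
    (φ : C(K, ℝ) →L[ℝ] ℝ) : Tendsto (fun i => φ (f + β i * g)) cofinite (𝓝 (φ f)) := by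
  have hMg : ∀ i, ‖β i * g‖₊ ≤ M * ‖g‖₊ := fun i =>
    (nnnorm_mul_le _ _).trans (mul_le_mul_of_nonneg_right (hM i) zero_le)
  have hmul_g : Pairwise ((· * · = 0) on fun i => β i * g) := fun i j hij =>
    (mul_mul_mul_comm _ _ _ _).trans (mul_eq_zero_of_left (hmul hij) _)
  simpa only [map_add, add_zero] using
    (tendsto_apply_cofinite_zero_of_pairwise_mul_eq_zero hMg hmul_g φ).const_add (φ f)

theorem exists_infinite_setOf_lt_mul_apply [T1Space K] [Nonempty K] [∀ t : K, (𝓝[≠] t).NeBot]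
    {u : C(K, ℝ)} {s : ℝ} (hs : s < ‖u‖) : ∃ σ : ℝ, |σ| = 1 ∧ {t | s < σ * u t}.Infinite := by
  obtain ⟨t₀, ht₀⟩ : ∃ t₀, s < ‖u t₀‖ := by
    by_contra! h
    exact hs.not_ge ((ContinuousMap.norm_le_of_nonempty u).2 h)
  obtain ⟨σ, hσ, hσu⟩ := RCLike.exists_norm_eq_mul_self (u t₀)
  have hopen : IsOpen {t | s < σ * u t} := isOpen_lt continuous_const (by fun_prop)
  exact ⟨σ, hσ, infinite_of_mem_nhds t₀ (hopen.mem_nhds (ht₀.trans_eq hσu))⟩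

end ContinuousFunctions

section Renorming

variable {K : Type*} [TopologicalSpace K] [CompactSpace K] {E : Type*} [NormedAddCommGroup E]
  [NormedSpace ℝ E] {a b : ℝ} {p : K} {e : C(K, ℝ) ≃L[ℝ] E}

theorem ts_le_of_norm_eq (ha : 0 ≤ a) (hb : 0 ≤ b) (hab : a + b = 1)
    (he : ∀ f, ‖e f‖ = a * ‖f‖ + b * |f p|) : Ts E ≤ 2 * a := by
  have : Nonempty K := ⟨p⟩
  have hsymm : ∀ y, ‖y‖ = a * ‖e.symm y‖ + b * |e.symm y p| := fun y => by
    rw [← he, e.apply_symm_apply]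
  refine ts_le_two_mul ha hb hab ((normSeminorm ℝ C(K, ℝ)).comp e.symm.toLinearMap)
    ((ContinuousMap.evalCLM ℝ p).comp e.symm.toContinuousLinearMap) hsymm
    (fun y => (e.symm y).norm_coe_le_norm p) (x := e 1) ?_ ?_ <;> simp

theorem norm_smul_evalCLM_comp_symm_le (hb : 0 ≤ b)
    (he : ∀ f, ‖e f‖ = a * ‖f‖ + b * |f p|) {c : ℝ} (hc : |c| ≤ a) (t : K) :
    ‖c • (ContinuousMap.evalCLM ℝ t).comp e.symm.toContinuousLinearMap‖ ≤ 1 := by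
  refine ContinuousLinearMap.opNorm_le_bound _ zero_le_one fun y => ?_
  obtain ⟨f, rfl⟩ := e.surjective y
  calc ‖(c • (ContinuousMap.evalCLM ℝ t).comp e.symm.toContinuousLinearMap) (e f)‖
      = |c| * |f t| := by simp
    _ ≤ a * ‖f‖ := mul_le_mul hc (f.norm_coe_le_norm t) (abs_nonneg _) ((abs_nonneg c).trans hc)
    _ ≤ 1 * ‖e f‖ := by rw [one_mul, he]; exact le_add_of_nonneg_right (by positivity)

theorem exists_tendsto_of_pairwise_mul_eq_zero_bumps (ha : 0 < a) (hb : 0 ≤ b) (hab : a + b = 1)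
    (he : ∀ f, ‖e f‖ = a * ‖f‖ + b * |f p|) {σ : ℝ} (hσ : |σ| = 1) {ι : Type*} {t : ι → K}
    {β : ι → C(K, ℝ)} (hβt : ∀ i, β i (t i) = 1) (hβ : ∀ i s, β i s ∈ Icc (0 : ℝ) 1)
    (hβp : ∀ i, β i p = 0) (hmul : Pairwise ((· * · = 0) on β)) {w : E}
    (hw : w ∈ closedBall 0 1) :
    ∃ v : ι → E, (∀ i, v i ∈ closedBall 0 1) ∧ (∀ i, a ≤ σ * a * e.symm (v i) (t i)) ∧
      ∀ φ : E →L[ℝ] ℝ, Tendsto (fun i => φ (v i)) cofinite (𝓝 (φ w)) := by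
  obtain ⟨f, rfl⟩ := e.surjective w
  rw [mem_closedBall_zero_iff, he] at hw
  -- The largest sup norm allowed in the unit ball of `E` by the value `f p`.
  set d := (1 - b * |f p|) / a
  have had : a * d = 1 - b * |f p| := mul_div_cancel₀ _ ha.ne'
  have hfd : ‖f‖ ≤ d := (le_div_iff₀' ha).2 (by linarith)
  have hd : 1 ≤ d := by
    have hfp : |f p| ≤ d := (f.norm_coe_le_norm p).trans hfd
    nlinarith
  have hσd : |σ * d| = d := by rw [abs_mul, hσ, one_mul, abs_of_nonneg (by linarith)]
  let v : ι → C(K, ℝ) := fun i => f + β i * (ContinuousMap.const K (σ * d) - f)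
  have hvp : ∀ i, v i p = f p := fun i => by simp [v, hβp]
  have hvt : ∀ i, v i (t i) = σ * d := fun i => by simp [v, hβt]
  have hvd : ∀ i, ‖v i‖ ≤ d := fun i =>
    (norm_add_mul_const_sub_le (hβ i) (hfd.trans_eq hσd.symm)).trans_eq hσd
  have hβ_norm : ∀ i, ‖β i‖₊ ≤ 1 := fun i =>
    (ContinuousMap.norm_le _ zero_le_one).2 fun s =>
      abs_le.2 ⟨by linarith [(hβ i s).1], (hβ i s).2⟩
  refine ⟨fun i => e (v i), fun i => ?_, fun i => ?_, fun φ => ?_⟩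
  · rw [mem_closedBall_zero_iff, he, hvp]
    linarith [mul_le_mul_of_nonneg_left (hvd i) ha.le]
  · have hσσ : σ * σ = 1 := by rw [← abs_mul_abs_self, hσ, one_mul]
    rw [e.symm_apply_apply, hvt]
    calc a ≤ a * d := le_mul_of_one_le_right ha.le hd
      _ = σ * a * (σ * d) := by linear_combination -(a * d) * hσσ
  · exact tendsto_apply_add_mul_cofinite hβ_norm hmul f _ (φ.comp e.toContinuousLinearMap)

variable [T2Space K] [∀ t : K, (𝓝[≠] t).NeBot]

theorem two_mul_le_of_comboSet_subset_closedBall (ha : 0 < a) (hb : 0 ≤ b) (hab : a + b = 1)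
    (he : ∀ f, ‖e f‖ = a * ‖f‖ + b * |f p|) {ρ : ℝ} {x : E} (hx : ‖x‖ = 1) {n : ℕ}
    {l : Fin n → ℝ} {W : Fin n → Set E} (hl : ∀ j, 0 ≤ l j) (hsum : ∑ j, l j = 1)
    (hW : ∀ j, IsRelWeakOpen E (W j)) (hsub : comboSet E l W ⊆ closedBall x ρ) : 2 * a ≤ ρ := by
  have : Nonempty K := ⟨p⟩
  refine le_of_forall_pos_sub_le fun ε hε => ?_
  obtain ⟨u, rfl⟩ := e.surjective x
  have hu : 1 ≤ ‖u‖ := by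
    rw [he] at hx
    linear_combination b * u.norm_coe_le_norm p - hx + ‖u‖ * hab
  obtain ⟨σ, hσ, hV_inf⟩ := exists_infinite_setOf_lt_mul_apply (u := u) (s := 1 - ε) (by linarith)
  have hV_open : IsOpen {t | 1 - ε < σ * u t} := isOpen_lt continuous_const (by fun_prop)
  obtain ⟨t, β, htV, hβt, hβ, hβ_zero, hmul⟩ := exists_pairwise_mul_eq_zero_bumps
    (hV_open.sdiff (isClosed_singleton (x := p))) (hV_inf.sdiff (finite_singleton p))
  have hσa : |-σ * a| ≤ a := by rw [abs_mul, abs_neg, hσ, one_mul, abs_of_pos ha]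
  refine le_of_comboSet_subset_closedBall (F := cofinite)
    (fun i => norm_smul_evalCLM_comp_symm_le hb he hσa (t i)) (fun w hw => ?_) hl hsum hW hsub
  obtain ⟨v, hv, hvt, hlim⟩ := exists_tendsto_of_pairwise_mul_eq_zero_bumps ha hb hab he
    ((abs_neg σ).trans hσ) hβt hβ (fun i => hβ_zero i p fun h => h.2 rfl) hmul hw
  refine ⟨v, hv, fun i => ?_, hlim⟩
  have hut : a * (1 - ε) ≤ a * (σ * u (t i)) := mul_le_mul_of_nonneg_left (htV i).1.le ha.le
  calc 2 * a - ε ≤ a + a * (1 - ε) := by nlinarith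
    _ ≤ -σ * a * e.symm (v i) (t i) + a * (σ * u (t i)) := add_le_add (hvt i) hut
    _ = ((-σ * a) • (ContinuousMap.evalCLM ℝ (t i)).comp e.symm.toContinuousLinearMap)
        (v i - e u) := by
      simp only [smul_apply, ContinuousLinearMap.comp_apply, ContinuousLinearEquiv.coe_coe,
        map_sub, e.symm_apply_apply, ContinuousMap.evalCLM_apply, smul_eq_mul]
      ring

theorem indices_eq_two_mul_of_norm_eq (ha : 0 < a) (hb : 0 ≤ b) (hab : a + b = 1)
    (he : ∀ f, ‖e f‖ = a * ‖f‖ + b * |f p|) : Ts E = 2 * a ∧ Tw E = 2 * a ∧ Tcc E = 2 * a := by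
  have : Nonempty K := ⟨p⟩
  have : Nontrivial E := e.symm.toEquiv.nontrivial
  exact indices_eq_of_ts_le_of_le_tcc (ts_le_of_norm_eq ha.le hb hab he)
    (le_tcc fun _ _ hx _ _ _ hl hsum hW hsub =>
      two_mul_le_of_comboSet_subset_closedBall ha hb hab he hx hl hsum hW hsub)

end Renorming

section Existence

theorem exists_continuousLinearEquiv_norm_eq.{u} {Y : Type u} [NormedAddCommGroup Y]
    [NormedSpace ℝ Y] (φ : Y →L[ℝ] ℝ) {a b : ℝ} (ha : 0 < a) (hb : 0 ≤ b) :
    ∃ (E : Type u) (_ : NormedAddCommGroup E) (_ : NormedSpace ℝ E) (e : Y ≃L[ℝ] E),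
      ∀ y, ‖e y‖ = a * ‖y‖ + b * |φ y| := by
  let T : Y →L[ℝ] WithLp 1 (Y × ℝ) :=
    (WithLp.prodContinuousLinearEquiv 1 ℝ Y ℝ).symm.toContinuousLinearMap.comp
      ((a • ContinuousLinearMap.id ℝ Y).prod (b • φ))
  have hT_norm : ∀ y, ‖T y‖ = a * ‖y‖ + b * |φ y| := fun y => by
    simp [T, WithLp.prod_norm_eq_of_L1, norm_smul, abs_of_pos ha, abs_of_nonneg hb]
  have hT_lower : ∀ y, ‖y‖ ≤ a⁻¹ * ‖T y‖ := fun y => by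
    rw [hT_norm, ← div_eq_inv_mul, le_div_iff₀' ha]
    exact le_add_of_nonneg_right (by positivity)
  have hT_inj : Injective T.toLinearMap := (injective_iff_map_eq_zero _).2 fun y hy =>
    norm_le_zero_iff.1 ((hT_lower y).trans_eq (by rw [show T y = 0 from hy, norm_zero, mul_zero]))
  let e := LinearEquiv.ofInjective T.toLinearMap hT_inj
  refine ⟨T.toLinearMap.range, inferInstance, inferInstance,
    e.toContinuousLinearEquivOfBounds ‖T‖ a⁻¹ T.le_opNorm fun z => ?_, hT_norm⟩
  obtain ⟨y, rfl⟩ := e.surjective z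
  rw [e.symm_apply_apply]
  exact hT_lower y

theorem indices_real : Ts ℝ = 0 ∧ Tw ℝ = 0 ∧ Tcc ℝ = 0 := by
  have hTs : Ts ℝ ≤ 2 * 0 := ts_le_two_mul le_rfl zero_le_one (zero_add 1) (normSeminorm ℝ ℝ)
    (.id ℝ ℝ) (x := 1) (by simp) (fun _ => le_rfl) (by simp) (by simp)
  exact indices_eq_of_ts_le_of_le_tcc (by simpa using hTs) (tcc_nonneg ℝ)

end Existence

theorem stmt_9 (r : ℝ) (hr₀ : 0 ≤ r) (hr₂ : r ≤ 2) :
    ∃ (X : Type) (_ : NormedAddCommGroup X) (_ : NormedSpace ℝ X) (_ : CompleteSpace X)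
      (_ : Nontrivial X), Ts X = r ∧ Tw X = r ∧ Tcc X = r := by
  rcases hr₀.eq_or_lt with rfl | hr
  · exact ⟨ℝ, inferInstance, inferInstance, inferInstance, inferInstance, indices_real⟩
  · obtain ⟨E, _, _, e, he⟩ := exists_continuousLinearEquiv_norm_eq
      (ContinuousMap.evalCLM ℝ (0 : unitInterval)) (half_pos hr) (b := 1 - r / 2) (by linarith)
    have hE_complete : CompleteSpace E :=
      (completeSpace_congr (e := e.toEquiv) e.isUniformEmbedding).1 inferInstance
    have hE := indices_eq_two_mul_of_norm_eq (half_pos hr) (by linarith) (by ring) he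
    rw [mul_div_cancel₀ r two_ne_zero] at hE
    exact ⟨E, _, _, hE_complete, e.symm.toEquiv.nontrivial, hE⟩
end
end

section
/- Let X and Y be real Banach spaces. Then 𝒯^s(X ⊕_∞ Y) ≥ min{𝒯^s(X), 𝒯^s(Y)}, and if moreover 𝒯^s(X ⊕_∞ Y) > 1, then 𝒯^s(X ⊕_∞ Y) = min{𝒯^s(X), 𝒯^s(Y)}; here X ⊕_∞ Y is the ℓ_∞-sum of X and Y. -/
open Metric Set

noncomputable section

variable (X : Type*) [NormedAddCommGroup X] [NormedSpace ℝ X]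

/-!
The norm of a functional on the sup-normed product `E × F` is at most the sum of the norms of its
two restrictions, so every slice of the unit ball of `E × F` contains a product `S ×ˢ T` of slices.
If `S ×ˢ T` lies in a ball around `(x, y)`, then `S` and `T` lie in the balls of the same radius
around `x` and `y`, and one of `x`, `y` has norm one when `(x, y)` does. Conversely, if `S` is a
slice contained in the ball of radius `r` around `x`, then the product of `S` with the unit ball
of `F` is a slice contained in the ball of radius `max r 1` around `(x, 0)`.
-/

section OperatorNorm

variable {𝕜 E F G : Type*} [NontriviallyNormedField 𝕜]
  [SeminormedAddCommGroup E] [NormedSpace 𝕜 E] [SeminormedAddCommGroup F] [NormedSpace 𝕜 F]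
  [SeminormedAddCommGroup G] [NormedSpace 𝕜 G]

theorem norm_le_norm_comp_inl_add_norm_comp_inr (f : E × F →L[𝕜] G) :
    ‖f‖ ≤ ‖f ∘L .inl 𝕜 E F‖ + ‖f ∘L .inr 𝕜 E F‖ := by
  refine f.opNorm_le_bound (by positivity) fun z => ?_
  rw [← Prod.mk.eta (p := z), ← f.comp_inl_add_comp_inr, add_mul]
  exact norm_add_le_of_le (ContinuousLinearMap.le_opNorm_of_le _ (norm_fst_le z))
    (ContinuousLinearMap.le_opNorm_of_le _ (norm_snd_le z))

theorem norm_comp_fst (f : E →L[𝕜] G) : ‖f ∘L .fst 𝕜 E F‖ = ‖f‖ := by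
  refine le_antisymm ?_ (f.opNorm_le_bound (norm_nonneg _) fun u => ?_)
  · exact (f.opNorm_comp_le _).trans
      (mul_le_of_le_one_right (norm_nonneg f) (ContinuousLinearMap.norm_fst_le 𝕜 E F))
  · simpa using (f ∘L .fst 𝕜 E F).le_opNorm (u, 0)

end OperatorNorm

theorem exists_norm_eq_one_and_norm_smul_eq {V : Type*} [NormedAddCommGroup V] [NormedSpace ℝ V]
    [Nontrivial V] (v : V) : ∃ u : V, ‖u‖ = 1 ∧ ‖v‖ • u = v := by
  rcases eq_or_ne v 0 with rfl | hv
  · obtain ⟨u, hu⟩ := exists_norm_eq V zero_le_one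
    exact ⟨u, hu, by simp⟩
  · exact ⟨NormedSpace.normalize v, NormedSpace.norm_normalize_eq_one_iff.2 hv,
      NormedSpace.norm_smul_normalize v⟩

section Slice

variable {E F : Type*} [NormedAddCommGroup E] [NormedSpace ℝ E]
  [NormedAddCommGroup F] [NormedSpace ℝ F]

theorem IsSlice.subset_closedBall {S : Set E} (hS : IsSlice E S) : S ⊆ closedBall 0 1 := by
  obtain ⟨f, -, α, -, rfl⟩ := hS
  exact sep_subset _ _

theorem IsSlice.nonempty {S : Set E} (hS : IsSlice E S) : S.Nonempty := by
  obtain ⟨f, hf, α, hα, rfl⟩ := hS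
  obtain ⟨v, hv, hfv⟩ := f.exists_lt_apply_of_lt_opNorm (r := 1 - α) (by linarith)
  rcases lt_abs.1 hfv with hpos | hneg
  · exact ⟨v, by simpa using hv.le, hpos⟩
  · exact ⟨-v, by simpa using hv.le, by rwa [map_neg]⟩

theorem exists_isSlice_forall_norm_sub_lt_apply [Nontrivial E] (g : E →L[ℝ] ℝ) {ε : ℝ}
    (hε : 0 < ε) : ∃ S : Set E, IsSlice E S ∧ ∀ u ∈ S, ‖g‖ - ε < g u := by
  obtain ⟨g', hg', hgg'⟩ := exists_norm_eq_one_and_norm_smul_eq g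
  have hδ : ‖g‖ * (ε / (‖g‖ + 1)) < ε := by
    rw [mul_div_left_comm]
    exact mul_lt_of_lt_one_right hε ((div_lt_one (by positivity)).2 (lt_add_one _))
  refine ⟨sliceSet E g' (ε / (‖g‖ + 1)), ⟨g', hg', _, by positivity, rfl⟩, ?_⟩
  rintro u ⟨-, hu⟩
  calc ‖g‖ - ε < ‖g‖ * (1 - ε / (‖g‖ + 1)) := by linarith
    _ ≤ ‖g‖ * g' u := by gcongr
    _ = g u := DFunLike.congr_fun hgg' u

theorem exists_isSlice_prod_subset [Nontrivial E] [Nontrivial F] {S : Set (E × F)}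
    (hS : IsSlice (E × F) S) : ∃ S₁ S₂, IsSlice E S₁ ∧ IsSlice F S₂ ∧ S₁ ×ˢ S₂ ⊆ S := by
  obtain ⟨f, hf, α, hα, rfl⟩ := hS
  obtain ⟨S₁, hS₁, hfS₁⟩ :=
    exists_isSlice_forall_norm_sub_lt_apply (f ∘L .inl ℝ E F) (half_pos hα)
  obtain ⟨S₂, hS₂, hfS₂⟩ :=
    exists_isSlice_forall_norm_sub_lt_apply (f ∘L .inr ℝ E F) (half_pos hα)
  refine ⟨S₁, S₂, hS₁, hS₂, fun ⟨u, v⟩ ⟨hu, hv⟩ => ⟨?_, ?_⟩⟩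
  · rw [← Prod.mk_zero_zero, ← closedBall_prod_same]
    exact ⟨hS₁.subset_closedBall hu, hS₂.subset_closedBall hv⟩
  · rw [← f.comp_inl_add_comp_inr]
    linarith [norm_le_norm_comp_inl_add_norm_comp_inr f, hfS₁ u hu, hfS₂ v hv]

theorem IsSlice.prod_closedBall {S : Set E} (hS : IsSlice E S) :
    IsSlice (E × F) (S ×ˢ closedBall 0 1) := by
  obtain ⟨f, hf, α, hα, rfl⟩ := hS
  refine ⟨f ∘L .fst ℝ E F, (norm_comp_fst f).trans hf, α, hα, ?_⟩
  ext ⟨u, v⟩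
  simp only [sliceSet, ← Prod.mk_zero_zero, ← closedBall_prod_same, mem_prod, mem_ofPred_eq,
    ContinuousLinearMap.comp_apply, ContinuousLinearMap.coe_fst']
  tauto

theorem IsSlice.preimage {S : Set F} (hS : IsSlice F S) (e : E ≃ₗᵢ[ℝ] F) :
    IsSlice E (e ⁻¹' S) := by
  obtain ⟨f, hf, α, hα, rfl⟩ := hS
  refine ⟨f ∘L (e : E →L[ℝ] F), (f.opNorm_comp_linearIsometryEquiv e).trans hf, α, hα, ?_⟩
  ext u
  simp [sliceSet]

/-- `r` is one of the radii over which the infimum defining `Ts E` is taken: some slice of the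
closed unit ball lies in a closed ball of radius `r > 0` centered at a point of the unit sphere. -/
def IsSliceRadius (E : Type*) [NormedAddCommGroup E] [NormedSpace ℝ E] (r : ℝ) : Prop :=
  0 < r ∧ ∃ x : E, ‖x‖ = 1 ∧ ∃ S : Set E, IsSlice E S ∧ S ⊆ closedBall x r

theorem isSliceRadius_two [Nontrivial E] : IsSliceRadius E 2 := by
  obtain ⟨x, hx⟩ := exists_norm_eq E zero_le_one
  obtain ⟨S, hS, -⟩ := exists_isSlice_forall_norm_sub_lt_apply (0 : E →L[ℝ] ℝ) one_pos
  refine ⟨two_pos, x, hx, S, hS, hS.subset_closedBall.trans (closedBall_subset_closedBall' ?_)⟩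
  rw [dist_zero_left, hx, one_add_one_eq_two]

theorem isGLB_Ts [Nontrivial E] : IsGLB {r | IsSliceRadius E r} (Ts E) :=
  isGLB_csInf ⟨2, isSliceRadius_two⟩ ⟨0, fun _ hr => hr.1.le⟩

theorem IsSliceRadius.of_linearIsometryEquiv {r : ℝ} (h : IsSliceRadius F r) (e : E ≃ₗᵢ[ℝ] F) :
    IsSliceRadius E r := by
  obtain ⟨hr, x, hx, S, hS, hSx⟩ := h
  refine ⟨hr, e.symm x, (e.symm.norm_map x).trans hx, e ⁻¹' S, hS.preimage e, ?_⟩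
  exact (preimage_mono hSx).trans (e.preimage_closedBall x r).subset

theorem Ts_congr (e : E ≃ₗᵢ[ℝ] F) : Ts E = Ts F :=
  congr_arg sInf <| ext fun _ =>
    ⟨fun h : IsSliceRadius E _ => h.of_linearIsometryEquiv e.symm,
      fun h : IsSliceRadius F _ => h.of_linearIsometryEquiv e⟩

theorem IsSliceRadius.of_prod [Nontrivial E] [Nontrivial F] {r : ℝ}
    (h : IsSliceRadius (E × F) r) : IsSliceRadius E r ∨ IsSliceRadius F r := by
  obtain ⟨hr, ⟨x, y⟩, hxy, S, hS, hSxy⟩ := h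
  obtain ⟨S₁, S₂, hS₁, hS₂, hprod⟩ := exists_isSlice_prod_subset hS
  have hballs : S₁ ×ˢ S₂ ⊆ closedBall x r ×ˢ closedBall y r :=
    (hprod.trans hSxy).trans (closedBall_prod_same x y r).superset
  obtain ⟨hx, hy⟩ := (prod_subset_prod_iff' (hS₁.nonempty.prod hS₂.nonempty)).1 hballs
  rcases max_choice ‖x‖ ‖y‖ with hmax | hmax
  · exact .inl ⟨hr, x, hmax.symm.trans hxy, S₁, hS₁, hx⟩
  · exact .inr ⟨hr, y, hmax.symm.trans hxy, S₂, hS₂, hy⟩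

theorem IsSliceRadius.prod_max_one {r : ℝ} (h : IsSliceRadius E r) :
    IsSliceRadius (E × F) (max r 1) := by
  obtain ⟨hr, x, hx, S, hS, hSx⟩ := h
  refine ⟨lt_max_of_lt_left hr, (x, 0), by simp [hx], _, hS.prod_closedBall, ?_⟩
  rw [← closedBall_prod_same]
  exact prod_mono (hSx.trans (closedBall_subset_closedBall (le_max_left r 1)))
    (closedBall_subset_closedBall (le_max_right r 1))

theorem min_Ts_le_Ts_prod [Nontrivial E] [Nontrivial F] :
    min (Ts E) (Ts F) ≤ Ts (E × F) :=
  (le_isGLB_iff isGLB_Ts).2 fun _ hr =>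
    min_le_iff.2 (IsSliceRadius.of_prod hr |>.imp (isGLB_Ts.1 ·) (isGLB_Ts.1 ·))

theorem Ts_prod_le_left_of_one_lt [Nontrivial E] (h : 1 < Ts (E × F)) : Ts (E × F) ≤ Ts E :=
  (le_isGLB_iff isGLB_Ts).2 fun _ hr =>
    (le_max_iff.1 (isGLB_Ts.1 (IsSliceRadius.prod_max_one hr))).resolve_right h.not_ge

theorem Ts_prod_le_right_of_one_lt [Nontrivial F] (h : 1 < Ts (E × F)) : Ts (E × F) ≤ Ts F := by
  rw [Ts_congr (.prodComm ℝ E F)] at h ⊢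
  exact Ts_prod_le_left_of_one_lt h

end Slice

theorem stmt_13_general (X Y : Type*) [NormedAddCommGroup X] [NormedSpace ℝ X]
    [Nontrivial X] [NormedAddCommGroup Y] [NormedSpace ℝ Y] [Nontrivial Y] :
    min (Ts X) (Ts Y) ≤ Ts (WithLp ⊤ (X × Y)) ∧
      (1 < Ts (WithLp ⊤ (X × Y)) → Ts (WithLp ⊤ (X × Y)) = min (Ts X) (Ts Y)) := by
  rw [Ts_congr (WithLp.prodEquivₗᵢ (𝕜 := ℝ) (α := X) (β := Y))]
  refine ⟨min_Ts_le_Ts_prod, fun h => le_antisymm (le_min ?_ ?_) min_Ts_le_Ts_prod⟩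
  · exact Ts_prod_le_left_of_one_lt h
  · exact Ts_prod_le_right_of_one_lt h

theorem stmt_13 (X Y : Type*) [NormedAddCommGroup X] [NormedSpace ℝ X]
    [CompleteSpace X] [Nontrivial X] [NormedAddCommGroup Y] [NormedSpace ℝ Y]
    [CompleteSpace Y] [Nontrivial Y] :
    min (Ts X) (Ts Y) ≤ Ts (WithLp ⊤ (X × Y)) ∧
      (1 < Ts (WithLp ⊤ (X × Y)) → Ts (WithLp ⊤ (X × Y)) = min (Ts X) (Ts Y)) :=
  stmt_13_general X Y
end
end
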